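/- Let A be a symmetric positive definite 3×3 real matrix, let v₁, v₂, v₃ ∈ ℝ³ be affinely independent, let n = ((v₂−v₁) × (v₃−v₁)) / ‖(v₂−v₁) × (v₃−v₁)‖, T = {(s,t) : s ≥ 0, t ≥ 0, s+t ≤ 1}, ξ(s,t) = v₁ + s(v₂−v₁) + t(v₃−v₁), and let η ∈ ℝ³ lie outside the closed triangle {ξ(s,t) : (s,t) ∈ T}. Set vᵢ' = A^{-1/2}vᵢ, y = A^{-1/2}η, ξ'(s,t) = v₁' + s(v₂'−v₁') + t(v₃'−v₁'), and n' = ((v₂'−v₁') × (v₃'−v₁')) / ‖(v₂'−v₁') × (v₃'−v₁')‖. Then (‖(v₂−v₁) × (v₃−v₁)‖ / (4π√(det A))) ∬_T (1−s−t) · ((ξ(s,t)−η)·n) / ((ξ(s,t)−η)ᵀ A⁻¹ (ξ(s,t)−η))^{3/2} ds dt = (‖(v₂'−v₁') × (v₃'−v₁')‖ / (4π)) ∬_T (1−s−t) · ((ξ'(s,t)−y)·n') / ‖ξ'(s,t)−y‖³ ds dt; that is, the anisotropic Dirichlet boundary integral of the barycentric hat function of v₁ over the triangle equals the corresponding isotropic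 integral over the A^{-1/2}-transformed triangle. -/

import Mathlib

open Matrix Real MeasureTheory
open scoped RealInnerProductSpace

/-- The quadratic form `xᵀ M x` associated to a `d × d` matrix. -/
noncomputable def quadForm {d : ℕ} (M : Matrix (Fin d) (Fin d) ℝ)
    (x : EuclideanSpace ℝ (Fin d)) : ℝ :=
  ∑ i, ∑ j, x i * M i j * x j

/-- Matrix-vector multiplication, acting on Euclidean space. -/
noncomputable def matVec {d : ℕ} (M : Matrix (Fin d) (Fin d) ℝ)
    (x : EuclideanSpace ℝ (Fin d)) : EuclideanSpace ℝ (Fin d) :=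
  Matrix.toEuclideanLin M x

/-- The cross product on Euclidean `ℝ³`. -/
noncomputable def cross3 (u v : EuclideanSpace ℝ (Fin 3)) : EuclideanSpace ℝ (Fin 3) :=
  (EuclideanSpace.equiv (Fin 3) ℝ).symm
    (crossProduct ((EuclideanSpace.equiv (Fin 3) ℝ) u) ((EuclideanSpace.equiv (Fin 3) ℝ) v))

/-- The standard 2-simplex `T = {(s,t) : s ≥ 0, t ≥ 0, s + t ≤ 1} ⊆ ℝ²`. -/
def simplexT : Set (ℝ × ℝ) := {p | 0 ≤ p.1 ∧ 0 ≤ p.2 ∧ p.1 + p.2 ≤ 1}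

theorem aux_quad (M : Matrix (Fin 3) (Fin 3) ℝ) (hM : M.IsSymm)
    (x : EuclideanSpace ℝ (Fin 3)) : quadForm (M * M) x = ‖matVec M x‖ ^ 2 := by
  have h01 := hM.apply 0 1
  have h02 := hM.apply 0 2
  have h12 := hM.apply 1 2
  rw [EuclideanSpace.norm_sq_eq]
  simp [quadForm, matVec, Matrix.mul_apply, Matrix.toLpLin_apply, Matrix.mulVec, dotProduct,
    Fin.sum_univ_three, h01, h02, h12]
  ring

theorem aux_triple (M : Matrix (Fin 3) (Fin 3) ℝ) (w a b : EuclideanSpace ℝ (Fin 3)) :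
    ⟪matVec M w, cross3 (matVec M a) (matVec M b)⟫ = M.det * ⟪w, cross3 a b⟫ := by
  simp [PiLp.inner_apply, cross3, matVec, Matrix.toLpLin_apply, Matrix.mulVec, dotProduct,
    Fin.sum_univ_three, Matrix.det_fin_three, crossProduct]
  ring

theorem aux_normal (w c : EuclideanSpace ℝ (Fin 3)) :
    ‖c‖ * ⟪w, ‖c‖⁻¹ • c⟫ = ⟪w, c⟫ := by
  rw [real_inner_smul_right]
  by_cases h : c = 0
  · simp [h]
  · have : ‖c‖ ≠ 0 := norm_ne_zero_iff.mpr h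
    field_simp

/-- Let `A` be a symmetric positive definite `3 × 3` matrix with symmetric
positive definite square root `B = A^{1/2}`, let `v₁, v₂, v₃` be affinely independent with
unit normal `n`, `ξ(s,t) = v₁ + s(v₂−v₁) + t(v₃−v₁)`, and `η` outside the closed triangle.
With `vᵢ' = A^{-1/2}vᵢ`, `y = A^{-1/2}η`, `ξ'(s,t) = v₁' + s(v₂'−v₁') + t(v₃'−v₁')` and unit
normal `n'` of the transformed triangle, the anisotropic Dirichlet boundary integral of the
barycentric hat function of `v₁` over the triangle equals the corresponding isotropic integral
over the `A^{-1/2}`-transformed triangle. -/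
theorem anisotropic_dirichlet_integral_transform_3d
    (A B : Matrix (Fin 3) (Fin 3) ℝ)
    (hA : A.PosDef) (hAsymm : A.IsSymm)
    (hB : B.PosDef) (hBsymm : B.IsSymm) (hBA : B * B = A)
    (v₁ v₂ v₃ : EuclideanSpace ℝ (Fin 3)) (hind : cross3 (v₂ - v₁) (v₃ - v₁) ≠ 0)
    (n : EuclideanSpace ℝ (Fin 3))
    (hn : n = ‖cross3 (v₂ - v₁) (v₃ - v₁)‖⁻¹ • cross3 (v₂ - v₁) (v₃ - v₁))
    (η : EuclideanSpace ℝ (Fin 3))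
    (hη : η ∉ (fun p : ℝ × ℝ => v₁ + p.1 • (v₂ - v₁) + p.2 • (v₃ - v₁)) '' simplexT)
    (v₁' v₂' v₃' y : EuclideanSpace ℝ (Fin 3))
    (hv₁' : v₁' = matVec B⁻¹ v₁) (hv₂' : v₂' = matVec B⁻¹ v₂) (hv₃' : v₃' = matVec B⁻¹ v₃)
    (hy : y = matVec B⁻¹ η)
    (n' : EuclideanSpace ℝ (Fin 3))
    (hn' : n' = ‖cross3 (v₂' - v₁') (v₃' - v₁')‖⁻¹ • cross3 (v₂' - v₁') (v₃' - v₁')) :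
    (‖cross3 (v₂ - v₁) (v₃ - v₁)‖ / (4 * π * Real.sqrt A.det)) *
      ∫ p in simplexT,
        (1 - p.1 - p.2) * ⟪v₁ + p.1 • (v₂ - v₁) + p.2 • (v₃ - v₁) - η, n⟫ /
          (quadForm A⁻¹ (v₁ + p.1 • (v₂ - v₁) + p.2 • (v₃ - v₁) - η)) ^ ((3:ℝ)/2) =
    (‖cross3 (v₂' - v₁') (v₃' - v₁')‖ / (4 * π)) *
      ∫ p in simplexT,
        (1 - p.1 - p.2) * ⟪v₁' + p.1 • (v₂' - v₁') + p.2 • (v₃' - v₁') - y, n'⟫ /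
          ‖v₁' + p.1 • (v₂' - v₁') + p.2 • (v₃' - v₁') - y‖ ^ 3 := by
  subst hBA
  have hdet : 0 < B.det := hB.det_pos
  have hMs : B⁻¹.IsSymm := by
    unfold Matrix.IsSymm
    rw [Matrix.transpose_nonsing_inv, hBsymm.eq]
  have hsq : Real.sqrt (B * B).det = B.det := by
    rw [Matrix.det_mul, Real.sqrt_mul_self hdet.le]
  have hMdet : B⁻¹.det = (B.det)⁻¹ := by
    rw [Matrix.det_nonsing_inv, Ring.inverse_eq_inv']
  rw [hsq, Matrix.mul_inv_rev, ← integral_const_mul, ← integral_const_mul]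
  congr 1
  funext p
  have ha : v₂' - v₁' = matVec B⁻¹ (v₂ - v₁) := by
    rw [hv₁', hv₂']; simp [matVec]
  have hb : v₃' - v₁' = matVec B⁻¹ (v₃ - v₁) := by
    rw [hv₁', hv₃']; simp [matVec]
  have hw : v₁' + p.1 • (v₂' - v₁') + p.2 • (v₃' - v₁') - y
      = matVec B⁻¹ (v₁ + p.1 • (v₂ - v₁) + p.2 • (v₃ - v₁) - η) := by
    rw [ha, hb, hv₁', hy]; simp only [matVec, map_add, map_sub, map_smul]
  rw [hw, aux_quad _ hMs]
  generalize v₁ + p.1 • (v₂ - v₁) + p.2 • (v₃ - v₁) - η = w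
  have h1 := aux_normal w (cross3 (v₂ - v₁) (v₃ - v₁))
  have h2 := aux_normal (matVec B⁻¹ w) (cross3 (v₂' - v₁') (v₃' - v₁'))
  rw [← hn] at h1
  rw [← hn'] at h2
  have h3 := aux_triple B⁻¹ w (v₂ - v₁) (v₃ - v₁)
  rw [← ha, ← hb, hMdet, ← h1, ← h2] at h3
  have hpow : (‖matVec B⁻¹ w‖ ^ 2) ^ ((3:ℝ)/2) = ‖matVec B⁻¹ w‖ ^ 3 := by
    rw [← Real.rpow_natCast, ← Real.rpow_mul (norm_nonneg _), ← Real.rpow_natCast]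
    norm_num
  rw [hpow]
  calc _ = (B.det⁻¹ * (‖cross3 (v₂ - v₁) (v₃ - v₁)‖ * ⟪w, n⟫)) *
        ((1 - p.1 - p.2) / (4 * π) / ‖matVec B⁻¹ w‖ ^ 3) := by
        simp only [div_eq_mul_inv, mul_inv]; ring
    _ = _ := by
        rw [← h3]; simp only [div_eq_mul_inv, mul_inv]; ring
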